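/- (Dupire formula in implied total variance form, Eq. (3.2).) Let S₀ > 0 and let Θ : (0,∞) × ℝ → (0,∞) be of class C^{1,2} (C¹ in the maturity variable T and C² in the log-moneyness variable κ). Define the reduced Black–Scholes put price p(T,k) = k·N(−d₋) − S₀·N(−d₊) for k > 0, where κ = log(k/S₀), θ = Θ(T,κ), d₊ = −κ/√θ + √θ/2, d₋ = d₊ − √θ, and N is the standard normal cumulative distribution function N(x) = ∫_{−∞}^{x} (2π)^{−1/2} e^{−t²/2} dt. Then for all T > 0 and k > 0 such that the denominator below is nonzero, ∂_T p(T,k) / (k² ∂²_k p(T,k)) = (1/2) · ∂_T Θ(T,κ) / [ 1 − (κ/Θ)·∂_κ Θ + (1/4)(−1/4 − 1/Θ + κ²/Θ²)(∂_κ Θ)² + (1/2)·∂²_κ Θ ], where Θ and its partial derivatives are evaluated at (T,κ). -/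

import Mathlib

open Real

/-!
Differentiating along any curve of strikes and total volatilities `s = √w`, the terms coming from
the log-moneyness cancel because `S φ(d₊) = k φ(d₋)`. The put price therefore has derivative
`k' Φ(-d₋) + k φ(d₋) s'`, which yields at once the maturity derivative (`k` constant) and the first
strike derivative (`s` a smile). One more differentiation in the strike, using `φ' = -x φ`, gives
the factor `k φ(d₋)` again, and it cancels in the Dupire ratio.
-/

section Gaussian

open MeasureTheory ProbabilityTheory
open scoped NNReal

theorem hasDerivAt_setIntegral_Iic {E : Type*} [NormedAddCommGroup E] [NormedSpace ℝ E]
    [CompleteSpace E] {f : ℝ → E} (hf : Integrable f) {x : ℝ} (hfx : ContinuousAt f x) :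
    HasDerivAt (fun y => ∫ t in Set.Iic y, f t) (f x) x := by
  have hsplit (y : ℝ) : ∫ t in Set.Iic y, f t = (∫ t in Set.Iic x, f t) + ∫ t in x..y, f t := by
    rw [← intervalIntegral.integral_Iic_sub_Iic hf.integrableOn hf.integrableOn, add_sub_cancel]
  rw [funext hsplit]
  exact (intervalIntegral.integral_hasDerivAt_right hf.intervalIntegrable
    hf.aestronglyMeasurable.stronglyMeasurableAtFilter hfx).const_add _

theorem cdf_gaussianReal_eq_integral (μ : ℝ) {v : ℝ≥0} (hv : v ≠ 0) (x : ℝ) :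
    cdf (gaussianReal μ v) x = ∫ t in Set.Iic x, gaussianPDFReal μ v t := by
  rw [cdf_eq_real, measureReal_def, gaussianReal_apply_eq_integral μ hv, ENNReal.toReal_ofReal]
  exact integral_nonneg (gaussianPDFReal_nonneg μ v)

theorem hasDerivAt_gaussianPDFReal (μ : ℝ) (v : ℝ≥0) (x : ℝ) :
    HasDerivAt (gaussianPDFReal μ v) (-((x - μ) / v) * gaussianPDFReal μ v x) x := by
  have hexponent : HasDerivAt (fun y => -(y - μ) ^ 2 / (2 * v)) (-((x - μ) / v)) x :=
    ((((hasDerivAt_id' x).sub_const μ).fun_pow 2).fun_neg.div_const (2 * (v : ℝ))).congr_deriv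
      (by ring)
  exact (hexponent.exp.const_mul _).congr_deriv (by rw [gaussianPDFReal]; ring)

theorem hasDerivAt_cdf_gaussianReal (μ : ℝ) {v : ℝ≥0} (hv : v ≠ 0) (x : ℝ) :
    HasDerivAt (cdf (gaussianReal μ v)) (gaussianPDFReal μ v x) x := by
  rw [funext (cdf_gaussianReal_eq_integral μ hv)]
  exact hasDerivAt_setIntegral_Iic (integrable_gaussianPDFReal μ v)
    (hasDerivAt_gaussianPDFReal μ v x).continuousAt

theorem gaussianPDFReal_zero_neg (v : ℝ≥0) (x : ℝ) :
    gaussianPDFReal 0 v (-x) = gaussianPDFReal 0 v x := by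
  simp [gaussianPDFReal]

theorem hasDerivAt_cdf_gaussianReal_zero_neg_comp {v : ℝ≥0} (hv : v ≠ 0) {d : ℝ → ℝ} {d' x : ℝ}
    (hd : HasDerivAt d d' x) :
    HasDerivAt (fun y => cdf (gaussianReal 0 v) (-d y)) (-(gaussianPDFReal 0 v (d x) * d')) x :=
  ((hasDerivAt_cdf_gaussianReal 0 hv (-d x)).comp x hd.fun_neg).congr_deriv <| by
    rw [gaussianPDFReal_zero_neg, mul_neg]

end Gaussian

namespace BlackScholes

open Filter ProbabilityTheory
open scoped Topology

local notation "Φ" => cdf (gaussianReal 0 1)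
local notation "φ" => gaussianPDFReal 0 1

/-- The Black–Scholes quantity `d₊` at log-moneyness `κ = log (k / S)` and total volatility `s`,
the square root of the total variance. -/
noncomputable def dPlus (κ s : ℝ) : ℝ := -κ / s + s / 2

/-- The Black–Scholes quantity `d₋` at log-moneyness `κ` and total volatility `s`. -/
noncomputable def dMinus (κ s : ℝ) : ℝ := dPlus κ s - s

/-- The reduced (undiscounted) Black–Scholes price of a put with strike `k` on a spot `S`, as a
function of the total volatility `s`. -/
noncomputable def put (S k s : ℝ) : ℝ :=
  k * Φ (-dMinus (log (k / S)) s) - S * Φ (-dPlus (log (k / S)) s)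

/-- The derivative of the put price in the strike, at log-moneyness `κ`, along a smile with total
volatility `s` and slope `s'` in log-moneyness. -/
noncomputable def strikeSlope (κ s s' : ℝ) : ℝ :=
  Φ (-dMinus κ s) + φ (dMinus κ s) * s'

/-- Durrleman's function of a smile: `w`, `w'`, `w''` are the total implied variance and its first
two derivatives at log-moneyness `κ`. Up to a positive factor it is the risk-neutral density. -/
noncomputable def durrleman (κ w w' w'' : ℝ) : ℝ :=
  1 - κ / w * w' + (1 / 4) * (-(1 / 4) - 1 / w + κ ^ 2 / w ^ 2) * w' ^ 2 + (1 / 2) * w''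

theorem dMinus_add_self (κ s : ℝ) : dMinus κ s + s = dPlus κ s :=
  sub_add_cancel _ _

theorem mul_gaussianPDFReal_dPlus {S k s : ℝ} (hS : 0 < S) (hk : 0 < k) (hs : s ≠ 0) :
    S * φ (dPlus (log (k / S)) s) = k * φ (dMinus (log (k / S)) s) := by
  have hexponent (κ : ℝ) : -dPlus κ s ^ 2 / 2 = κ + -dMinus κ s ^ 2 / 2 := by
    rw [dMinus, dPlus]
    field_simp
    ring
  simp only [gaussianPDFReal, NNReal.coe_one, mul_one, sub_zero, hexponent, exp_add,
    exp_log (div_pos hk hS)]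
  field_simp

section Curves

variable {κ s : ℝ → ℝ} {κ' s' x : ℝ}

theorem hasDerivAt_dMinus (hκ : HasDerivAt κ κ' x) (hs : HasDerivAt s s' x) (hs₀ : s x ≠ 0) :
    HasDerivAt (fun y => dMinus (κ y) (s y)) (-κ' / s x + κ x * s' / s x ^ 2 - s' / 2) x := by
  refine (((hκ.fun_neg.fun_div hs hs₀).fun_add (hs.div_const 2)).fun_sub hs).congr_deriv ?_
  field_simp
  ring

theorem hasDerivAt_put {S : ℝ} {k : ℝ → ℝ} {k' : ℝ} (hS : 0 < S) (hk₀ : 0 < k x)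
    (hk : HasDerivAt k k' x) (hs : HasDerivAt s s' x) (hs₀ : s x ≠ 0) :
    HasDerivAt (fun y => put S (k y) (s y))
      (k' * Φ (-dMinus (log (k x / S)) (s x)) + k x * φ (dMinus (log (k x / S)) (s x)) * s') x := by
  obtain ⟨d', hdMinus⟩ : ∃ d', HasDerivAt (fun y => dMinus (log (k y / S)) (s y)) d' x :=
    ⟨_, hasDerivAt_dMinus ((hk.div_const S).log (div_pos hk₀ hS).ne') hs hs₀⟩
  have hdPlus : HasDerivAt (fun y => dPlus (log (k y / S)) (s y)) (d' + s') x := by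
    simpa only [dMinus_add_self] using hdMinus.fun_add hs
  have hΦMinus := hasDerivAt_cdf_gaussianReal_zero_neg_comp one_ne_zero hdMinus
  have hΦPlus := hasDerivAt_cdf_gaussianReal_zero_neg_comp one_ne_zero hdPlus
  refine ((hk.fun_mul hΦMinus).fun_sub (hΦPlus.const_mul S)).congr_deriv ?_
  linear_combination (d' + s') * mul_gaussianPDFReal_dPlus hS hk₀ hs₀

end Curves

section Smile

variable {S k : ℝ} {s s' : ℝ → ℝ} {s'' κ : ℝ}

theorem hasDerivAt_log_div_const (hS : S ≠ 0) (hk : k ≠ 0) :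
    HasDerivAt (fun y => log (y / S)) k⁻¹ k :=
  (((hasDerivAt_id' k).div_const S).log (div_ne_zero hk hS)).congr_deriv (by field_simp)

theorem hasDerivAt_put_smile {m : ℝ} (hS : 0 < S) (hk : 0 < k)
    (hs : HasDerivAt s m (log (k / S))) (hs₀ : s (log (k / S)) ≠ 0) :
    HasDerivAt (fun y => put S y (s (log (y / S))))
      (strikeSlope (log (k / S)) (s (log (k / S))) m) k := by
  have hslog : HasDerivAt (fun y => s (log (y / S))) (m * k⁻¹) k :=
    hs.comp k (hasDerivAt_log_div_const hS.ne' hk.ne')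
  refine (hasDerivAt_put hS hk (hasDerivAt_id' k) hslog hs₀).congr_deriv ?_
  rw [strikeSlope]
  field_simp

theorem hasDerivAt_strikeSlope (hs : HasDerivAt s (s' κ) κ) (hs' : HasDerivAt s' s'' κ)
    (hs₀ : s κ ≠ 0) :
    HasDerivAt (fun y => strikeSlope y (s y) (s' y))
      (φ (dMinus κ (s κ)) / s κ *
        ((1 - κ * s' κ / s κ) ^ 2 - (s κ * s' κ / 2) ^ 2 + s κ * s'')) κ := by
  have hd := hasDerivAt_dMinus (hasDerivAt_id' κ) hs hs₀
  have hΦ := hasDerivAt_cdf_gaussianReal_zero_neg_comp one_ne_zero hd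
  have hφ := (hasDerivAt_gaussianPDFReal 0 1 _).comp κ hd
  refine (hΦ.fun_add (hφ.fun_mul hs')).congr_deriv ?_
  simp only [Function.comp_apply, NNReal.coe_one]
  generalize φ (dMinus κ (s κ)) = density
  rw [dMinus, dPlus]
  field_simp
  ring

theorem hasDerivAt_deriv_put_smile (hS : 0 < S) (hk : 0 < k) (hκ : κ = log (k / S))
    (hs : ∀ᶠ y in 𝓝 κ, HasDerivAt s (s' y) y) (hs' : HasDerivAt s' s'' κ) (hs₀ : s κ ≠ 0) :
    HasDerivAt (deriv fun y => put S y (s (log (y / S))))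
      (φ (dMinus κ (s κ)) / s κ *
        ((1 - κ * s' κ / s κ) ^ 2 - (s κ * s' κ / 2) ^ 2 + s κ * s'') * k⁻¹) k := by
  subst hκ
  have hlog := hasDerivAt_log_div_const hS.ne' hk.ne'
  have hderiv : (deriv fun y => put S y (s (log (y / S)))) =ᶠ[𝓝 k]
      fun y => strikeSlope (log (y / S)) (s (log (y / S))) (s' (log (y / S))) := by
    filter_upwards [lt_mem_nhds hk, hlog.continuousAt.eventually hs,
      hlog.continuousAt.eventually (hs.self_of_nhds.continuousAt.eventually_ne hs₀)]
      with y hy hsy hsy₀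
    exact (hasDerivAt_put_smile hS hy hsy hsy₀).deriv
  refine HasDerivAt.congr_of_eventuallyEq ?_ hderiv
  exact (hasDerivAt_strikeSlope hs.self_of_nhds hs' hs₀).comp k hlog

end Smile

section TotalVariance

variable {S k : ℝ} {w : ℝ → ℝ}

theorem hasDerivAt_put_sqrt {w' T : ℝ} (hS : 0 < S) (hk : 0 < k) (hw : HasDerivAt w w' T)
    (hw₀ : 0 < w T) :
    HasDerivAt (fun t => put S k √(w t))
      (k * φ (dMinus (log (k / S)) √(w T)) * (w' / (2 * √(w T)))) T := by
  simpa only [zero_mul, zero_add] using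
    hasDerivAt_put hS hk (hasDerivAt_const T k) (hw.sqrt hw₀.ne') (sqrt_ne_zero'.2 hw₀)

theorem hasDerivAt_div_two_mul_sqrt {w' : ℝ → ℝ} {w'' κ : ℝ} (hw : HasDerivAt w (w' κ) κ)
    (hw' : HasDerivAt w' w'' κ) (hw₀ : 0 < w κ) :
    HasDerivAt (fun y => w' y / (2 * √(w y)))
      (w'' / (2 * √(w κ)) - w' κ ^ 2 / (4 * √(w κ) ^ 3)) κ := by
  have hs₀ : √(w κ) ≠ 0 := sqrt_ne_zero'.2 hw₀
  refine (hw'.fun_div ((hw.sqrt hw₀.ne').const_mul 2) (by positivity)).congr_deriv ?_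
  field_simp
  ring

theorem durrleman_sq {s : ℝ} (hs : s ≠ 0) (κ w' w'' : ℝ) :
    durrleman κ (s ^ 2) w' w'' =
      (1 - κ * (w' / (2 * s)) / s) ^ 2 - (s * (w' / (2 * s)) / 2) ^ 2 +
        s * (w'' / (2 * s) - w' ^ 2 / (4 * s ^ 3)) := by
  rw [durrleman]
  field_simp
  ring

theorem hasDerivAt_deriv_put_sqrt_smile {w' : ℝ → ℝ} {w'' κ : ℝ} (hS : 0 < S) (hk : 0 < k)
    (hκ : κ = log (k / S)) (hw : ∀ᶠ y in 𝓝 κ, HasDerivAt w (w' y) y)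
    (hw' : HasDerivAt w' w'' κ) (hw₀ : 0 < w κ) :
    HasDerivAt (deriv fun y => put S y √(w (log (y / S))))
      (φ (dMinus κ √(w κ)) / (k * √(w κ)) * durrleman κ (w κ) (w' κ) w'') k := by
  have hs₀ : √(w κ) ≠ 0 := sqrt_ne_zero'.2 hw₀
  have hs : ∀ᶠ y in 𝓝 κ, HasDerivAt (fun y => √(w y)) (w' y / (2 * √(w y))) y := by
    filter_upwards [hw, hw.self_of_nhds.continuousAt.eventually_ne hw₀.ne'] with y hwy hwy₀
    exact hwy.sqrt hwy₀
  have hs' := hasDerivAt_div_two_mul_sqrt hw.self_of_nhds hw' hw₀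
  refine (hasDerivAt_deriv_put_smile hS hk hκ hs hs' hs₀).congr_deriv ?_
  rw [← durrleman_sq hs₀, sq_sqrt hw₀.le]
  ring

end TotalVariance

end BlackScholes

open BlackScholes ProbabilityTheory

/-- Dupire formula in implied total variance form: for the reduced
Black–Scholes put price `p(T,k) = k N(−d₋) − S₀ N(−d₊)` written in terms of the implied
total variance `Θ(T,κ)`, `κ = log(k/S₀)`, the reduced Dupire ratio equals
`½ ∂_T Θ / [1 − (κ/Θ)∂_κΘ + ¼(−¼ − 1/Θ + κ²/Θ²)(∂_κΘ)² + ½ ∂²_κΘ]`. -/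
theorem dupire_implied_total_variance (S₀ : ℝ) (hS₀ : 0 < S₀)
    (Θ ΘT Θκ Θκκ : ℝ → ℝ → ℝ)
    (hΘpos : ∀ T x : ℝ, 0 < T → 0 < Θ T x)
    (hΘT : ∀ T x : ℝ, 0 < T → HasDerivAt (fun t => Θ t x) (ΘT T x) T)
    (hΘκ : ∀ T x : ℝ, 0 < T → HasDerivAt (fun y => Θ T y) (Θκ T x) x)
    (hΘκκ : ∀ T x : ℝ, 0 < T → HasDerivAt (fun y => Θκ T y) (Θκκ T x) x)
    (Ncdf : ℝ → ℝ)
    (hN : ∀ x : ℝ, Ncdf x = ∫ t in Set.Iic x, (Real.sqrt (2 * π))⁻¹ * exp (-t ^ 2 / 2))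
    (p : ℝ → ℝ → ℝ)
    (hp : ∀ T k : ℝ, p T k =
      k * Ncdf (-(-Real.log (k / S₀) / Real.sqrt (Θ T (Real.log (k / S₀))) +
            Real.sqrt (Θ T (Real.log (k / S₀))) / 2 -
            Real.sqrt (Θ T (Real.log (k / S₀))))) -
        S₀ * Ncdf (-(-Real.log (k / S₀) / Real.sqrt (Θ T (Real.log (k / S₀))) +
            Real.sqrt (Θ T (Real.log (k / S₀))) / 2)))
    (T k : ℝ) (hT : 0 < T) (hk : 0 < k)
    (κ θ : ℝ) (hκ : κ = Real.log (k / S₀)) (hθ : θ = Θ T κ)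
    (hden : 1 - κ / θ * Θκ T κ +
        (1 / 4) * (-(1 / 4) - 1 / θ + κ ^ 2 / θ ^ 2) * (Θκ T κ) ^ 2 +
        (1 / 2) * Θκκ T κ ≠ 0) :
    deriv (fun t => p t k) T / (k ^ 2 * deriv (fun x => deriv (fun x' => p T x') x) k) =
      (1 / 2) * ΘT T κ /
        (1 - κ / θ * Θκ T κ +
          (1 / 4) * (-(1 / 4) - 1 / θ + κ ^ 2 / θ ^ 2) * (Θκ T κ) ^ 2 +
          (1 / 2) * Θκκ T κ) := by
  subst hκ hθ
  change durrleman _ _ _ _ ≠ 0 at hden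
  obtain rfl : Ncdf = cdf (gaussianReal 0 1) := by
    funext x
    simp [hN, cdf_gaussianReal_eq_integral, gaussianPDFReal]
  have hput : ∀ t x, p t x = put S₀ x √(Θ t (log (x / S₀))) := hp
  have hΘ₀ := hΘpos T (log (k / S₀)) hT
  have hmaturity := hasDerivAt_put_sqrt hS₀ hk (hΘT T _ hT) hΘ₀
  have hstrike := hasDerivAt_deriv_put_sqrt_smile hS₀ hk rfl
    (.of_forall fun x => hΘκ T x hT) (hΘκκ T _ hT) hΘ₀
  have hdensity := (gaussianPDFReal_pos 0 1 (dMinus (log (k / S₀)) √(Θ T (log (k / S₀))))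
    one_ne_zero).ne'
  have hs₀ := sqrt_ne_zero'.2 hΘ₀
  simp only [hput, hmaturity.deriv, hstrike.deriv]
  change _ = _ / durrleman _ _ _ _
  field_simp
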